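/- Let d ≥ 1, ε ∈ (0,1], and let A : ℝ^d → ℝ^{d×d} be a measurable matrix-valued function such that for almost every x ∈ ℝ^d the matrix A(x) is nonzero and satisfies the Cordes condition with parameter ε; set γ(x) := tr A(x)/‖A(x)‖_F². Then for every smooth (C^∞) compactly supported u : ℝ^d → ℝ, with Hessian ∇²u(x) = (∂_i∂_j u(x))_{i,j} and Laplacian Δu = tr ∇²u, one has ∫_{ℝ^d} γ(x)·(A(x):∇²u(x))·Δu(x) dx ≥ (1−√(1−ε))·∫_{ℝ^d} (Δu(x))² dx. (This is the whole-space form of the coercivity of the bilinear form a(u,v) = ∫ γA:∇²u Δv dx underlying Lemma 2.2; it combines the Cordes estimate of Lemma 2.1 with the Miranda–Talenti identity on ℝ^d.) -/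

import Mathlib

open Matrix MeasureTheory

/-- Frobenius inner product of two `d × d` real matrices. -/
noncomputable def frobInner {d : ℕ} (A B : Matrix (Fin d) (Fin d) ℝ) : ℝ :=
  ∑ i, ∑ j, A i j * B i j

/-- Frobenius norm of a `d × d` real matrix. -/
noncomputable def frobNorm {d : ℕ} (A : Matrix (Fin d) (Fin d) ℝ) : ℝ :=
  Real.sqrt (frobInner A A)

/-- The Cordes condition with parameter `ε`. -/
def CordesCond {d : ℕ} (ε : ℝ) (A : Matrix (Fin d) (Fin d) ℝ) : Prop :=
  ((d : ℝ) - 1 + ε) * frobNorm A ^ 2 ≤ trace A ^ 2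

/-- The Hessian matrix of a function `u : ℝ^d → ℝ` at a point `x`. -/
noncomputable def hessianMatrix {d : ℕ} (u : (Fin d → ℝ) → ℝ) (x : Fin d → ℝ) :
    Matrix (Fin d) (Fin d) ℝ :=
  Matrix.of fun i j =>
    fderiv ℝ (fun y => fderiv ℝ u y (Pi.single i 1)) x (Pi.single j 1)

/-!
After rescaling by `γ`, the Cordes condition says exactly that `γA` lies within Frobenius distance
`√(1 - ε)` of the identity, so Cauchy–Schwarz gives `|γA : M - tr M| ≤ √(1 - ε) ‖M‖_F` for every
matrix `M`. Taking `M = ∇²u`, multiplying by `Δu` and integrating, the error is absorbed by the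
Miranda–Talenti identity `∫ ‖∇²u‖_F² = ∫ (Δu)²`.

That identity is `∫ ∂ᵥf ∂_w g = ∫ ∂_w f ∂ᵥg` applied to the partial derivatives of `u`. When `u` is
only `C²` these are only `C¹`, so one cannot integrate by parts twice; instead the derivative along
`v` is replaced by a difference quotient, the derivative along `w` is moved by parts, the increment
is moved by translation invariance, and the step then tends to zero.
-/

open Filter Topology

section Frobenius

variable {d : ℕ} {ε : ℝ} {A : Matrix (Fin d) (Fin d) ℝ}

theorem frobInner_eq_trace_mul_transpose (A B : Matrix (Fin d) (Fin d) ℝ) :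
    frobInner A B = trace (A * Bᵀ) := rfl

theorem frobInner_self_nonneg (A : Matrix (Fin d) (Fin d) ℝ) : 0 ≤ frobInner A A :=
  Finset.sum_nonneg fun _ _ => Finset.sum_nonneg fun _ _ => mul_self_nonneg _

theorem frobInner_smul_sub_one_left (c : ℝ) (A B : Matrix (Fin d) (Fin d) ℝ) :
    frobInner (c • A - 1) B = c * frobInner A B - trace B := by
  simp [frobInner_eq_trace_mul_transpose, sub_mul]

theorem frobNorm_nonneg (A : Matrix (Fin d) (Fin d) ℝ) : 0 ≤ frobNorm A :=
  Real.sqrt_nonneg _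

theorem frobNorm_sq (A : Matrix (Fin d) (Fin d) ℝ) : frobNorm A ^ 2 = frobInner A A :=
  Real.sq_sqrt (frobInner_self_nonneg A)

theorem frobNorm_sq_pos (hA : A ≠ 0) : 0 < frobNorm A ^ 2 := by
  refine lt_of_le_of_ne (sq_nonneg _) fun h => hA ?_
  rwa [frobNorm_sq, frobInner_eq_trace_mul_transpose, ← conjTranspose_eq_transpose_of_trivial,
    eq_comm, trace_mul_conjTranspose_self_eq_zero_iff] at h

theorem continuous_frobNorm : Continuous (frobNorm (d := d)) := by
  unfold frobNorm frobInner
  fun_prop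

theorem abs_frobInner_le (A B : Matrix (Fin d) (Fin d) ℝ) :
    |frobInner A B| ≤ frobNorm A * frobNorm B := by
  rw [frobNorm, frobNorm, ← Real.sqrt_mul (frobInner_self_nonneg A)]
  refine Real.abs_le_sqrt ?_
  simpa only [Fintype.sum_prod_type, sq, frobInner] using
    Finset.sum_mul_sq_le_sq_mul_sq (Finset.univ : Finset (Fin d × Fin d))
      (fun p => A p.1 p.2) (fun p => B p.1 p.2)

theorem frobNorm_smul_sub_one_sq (c : ℝ) (A : Matrix (Fin d) (Fin d) ℝ) :
    frobNorm (c • A - 1) ^ 2 = c ^ 2 * frobNorm A ^ 2 - 2 * c * trace A + d := by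
  simp only [frobNorm_sq, frobInner_eq_trace_mul_transpose, transpose_sub, transpose_smul,
    transpose_one, sub_mul, mul_sub, smul_mul, Matrix.mul_smul, trace_sub, trace_smul,
    trace_transpose, trace_one, smul_eq_mul, mul_one, one_mul, Fintype.card_fin]
  ring

/-- The normalization factor `γ` of the Cordes condition, the scalar for which `γ • A` is closest
to the identity in the Frobenius norm. Its value at `A = 0` is the junk value `0`. -/
noncomputable def cordesFactor (A : Matrix (Fin d) (Fin d) ℝ) : ℝ :=
  trace A / frobNorm A ^ 2

theorem frobNorm_cordesFactor_smul_sub_one_sq (hA : A ≠ 0) :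
    frobNorm (cordesFactor A • A - 1) ^ 2 = d - trace A ^ 2 / frobNorm A ^ 2 := by
  rw [frobNorm_smul_sub_one_sq, cordesFactor]
  field_simp [(frobNorm_sq_pos hA).ne']
  ring

theorem cordesCond_iff_frobNorm_cordesFactor_smul_sub_one_sq_le (hA : A ≠ 0) :
    CordesCond ε A ↔ frobNorm (cordesFactor A • A - 1) ^ 2 ≤ 1 - ε := by
  rw [frobNorm_cordesFactor_smul_sub_one_sq hA, CordesCond, ← le_div_iff₀ (frobNorm_sq_pos hA)]
  constructor <;> intro h <;> linarith

theorem CordesCond.abs_cordesFactor_mul_frobInner_sub_trace_le (h : CordesCond ε A) (hA : A ≠ 0)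
    (M : Matrix (Fin d) (Fin d) ℝ) :
    |cordesFactor A * frobInner A M - trace M| ≤ √(1 - ε) * frobNorm M := by
  have hdist : frobNorm (cordesFactor A • A - 1) ≤ √(1 - ε) :=
    Real.le_sqrt_of_sq_le ((cordesCond_iff_frobNorm_cordesFactor_smul_sub_one_sq_le hA).1 h)
  rw [← frobInner_smul_sub_one_left]
  exact (abs_frobInner_le _ M).trans (mul_le_mul_of_nonneg_right hdist (frobNorm_nonneg M))

theorem CordesCond.abs_cordesFactor_mul_frobInner_mul_trace_sub_trace_sq_le (h : CordesCond ε A)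
    (hA : A ≠ 0) (M : Matrix (Fin d) (Fin d) ℝ) :
    |cordesFactor A * frobInner A M * trace M - trace M ^ 2|
      ≤ √(1 - ε) / 2 * (frobNorm M ^ 2 + trace M ^ 2) :=
  calc |cordesFactor A * frobInner A M * trace M - trace M ^ 2|
      = |cordesFactor A * frobInner A M - trace M| * |trace M| := by
        rw [← abs_mul, sub_mul, sq]
    _ ≤ √(1 - ε) * frobNorm M * |trace M| := by
        gcongr
        exact h.abs_cordesFactor_mul_frobInner_sub_trace_le hA M
    _ = √(1 - ε) / 2 * (2 * frobNorm M * |trace M|) := by ring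
    _ ≤ √(1 - ε) / 2 * (frobNorm M ^ 2 + trace M ^ 2) := by
        rw [← sq_abs (trace M)]
        gcongr
        exact two_mul_le_add_sq _ _

theorem aemeasurable_cordesFactor_mul_frobInner {X : Type*} [MeasurableSpace X] {μ : Measure X}
    {A B : X → Matrix (Fin d) (Fin d) ℝ} (hA : ∀ i j, AEMeasurable (fun x => A x i j) μ)
    (hB : ∀ i j, AEMeasurable (fun x => B x i j) μ) :
    AEMeasurable (fun x => cordesFactor (A x) * frobInner (A x) (B x)) μ := by
  simp only [cordesFactor, frobNorm, frobInner, trace, diag_apply]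
  fun_prop

end Frobenius

theorem integrable_mul_of_hasCompactSupport_right {X : Type*} [TopologicalSpace X]
    [MeasurableSpace X] [OpensMeasurableSpace X] {μ : Measure X} [IsFiniteMeasureOnCompacts μ]
    {f g : X → ℝ} (hf : Continuous f) (hg : Continuous g) (hgc : HasCompactSupport g) :
    Integrable (fun x => f x * g x) μ :=
  (hf.mul hg).integrable_of_hasCompactSupport hgc.mul_left

theorem contDiff_one_fderiv_apply {E F : Type*} [NormedAddCommGroup E] [NormedSpace ℝ E]
    [NormedAddCommGroup F] [NormedSpace ℝ F] {f : E → F} (hf : ContDiff ℝ 2 f) (v : E) :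
    ContDiff ℝ 1 fun x => fderiv ℝ f x v :=
  (hf.fderiv_right one_add_one_eq_two.le).clm_apply contDiff_const

section HaarMeasure

variable {E : Type*} [NormedAddCommGroup E] [NormedSpace ℝ E] [FiniteDimensional ℝ E]
  [MeasurableSpace E] [BorelSpace E] {μ : Measure E} [μ.IsAddHaarMeasure] {f g : E → ℝ}

theorem integral_comp_add_mul_fderiv_eq_neg (hf : ContDiff ℝ 1 f) (hg : ContDiff ℝ 1 g)
    (hgc : HasCompactSupport g) (w y : E) :
    ∫ x, f (x + y) * fderiv ℝ g x w ∂μ = -∫ x, fderiv ℝ f x w * g (x - y) ∂μ := by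
  have hfy : ContDiff ℝ 1 fun x => f (x + y) := by fun_prop
  have hfy' : Continuous fun x => fderiv ℝ (fun x => f (x + y)) x w := by fun_prop
  have hg' : Continuous fun x => fderiv ℝ g x w := by fun_prop
  calc ∫ x, f (x + y) * fderiv ℝ g x w ∂μ
      = -∫ x, fderiv ℝ (fun x => f (x + y)) x w * g x ∂μ :=
        integral_mul_fderiv_eq_neg_fderiv_mul_of_integrable
          (integrable_mul_of_hasCompactSupport_right hfy' hg.continuous hgc)
          (integrable_mul_of_hasCompactSupport_right hfy.continuous hg' (hgc.fderiv_apply ℝ w))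
          (integrable_mul_of_hasCompactSupport_right hfy.continuous hg.continuous hgc)
          (fun x _ => hfy.differentiable one_ne_zero x)
          (fun x _ => hg.differentiable one_ne_zero x)
    _ = -∫ x, fderiv ℝ f x w * g (x - y) ∂μ := by
        rw [← integral_sub_right_eq_self _ y]
        simp only [fderiv_comp_add_right, sub_add_cancel]

theorem tendsto_integral_inv_smul_sub_mul (hf : ContDiff ℝ 1 f) (hfc : HasCompactSupport f)
    (hg : Continuous g) (v : E) :
    Tendsto (fun t : ℝ => ∫ x, (t⁻¹ • (f (x + t • v) - f x)) * g x ∂μ) (𝓝[>] 0)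
      (𝓝 (∫ x, fderiv ℝ f x v * g x ∂μ)) := by
  obtain ⟨C, hC⟩ := hf.lipschitzWith_of_hasCompactSupport hfc one_ne_zero
  simpa only [(hf.differentiable one_ne_zero _).lineDeriv_eq_fderiv] using
    hC.integral_inv_smul_sub_mul_tendsto_integral_lineDeriv_mul' hfc hg v

theorem integral_inv_smul_sub_mul_fderiv_eq_neg (hf : ContDiff ℝ 1 f) (hfc : HasCompactSupport f)
    (hg : ContDiff ℝ 1 g) (hgc : HasCompactSupport g) (v w : E) (t : ℝ) :
    ∫ x, (t⁻¹ • (f (x + t • v) - f x)) * fderiv ℝ g x w ∂μ =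
      -∫ x, (t⁻¹ • (g (x + t • -v) - g x)) * fderiv ℝ f x w ∂μ := by
  have hf' : Continuous fun x => fderiv ℝ f x w := by fun_prop
  have hg' : Continuous fun x => fderiv ℝ g x w := by fun_prop
  have hshift := integral_comp_add_mul_fderiv_eq_neg (μ := μ) hf hg hgc w (t • v)
  have hzero := integral_comp_add_mul_fderiv_eq_neg (μ := μ) hf hg hgc w 0
  simp only [add_zero, sub_zero] at hzero
  simp only [smul_eq_mul, mul_assoc, integral_const_mul, sub_mul, smul_neg, ← sub_eq_add_neg]
  rw [integral_sub, integral_sub, hshift, hzero]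
  · simp only [mul_comm (fderiv ℝ f _ w)]
    ring
  · exact integrable_mul_of_hasCompactSupport_right (by fun_prop) hf' (hfc.fderiv_apply ℝ w)
  · exact integrable_mul_of_hasCompactSupport_right hg.continuous hf' (hfc.fderiv_apply ℝ w)
  · exact integrable_mul_of_hasCompactSupport_right (by fun_prop) hg' (hgc.fderiv_apply ℝ w)
  · exact integrable_mul_of_hasCompactSupport_right hf.continuous hg' (hgc.fderiv_apply ℝ w)

theorem integral_fderiv_mul_fderiv_comm (hf : ContDiff ℝ 1 f) (hfc : HasCompactSupport f)
    (hg : ContDiff ℝ 1 g) (hgc : HasCompactSupport g) (v w : E) :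
    ∫ x, fderiv ℝ f x v * fderiv ℝ g x w ∂μ = ∫ x, fderiv ℝ f x w * fderiv ℝ g x v ∂μ := by
  have hf' : Continuous fun x => fderiv ℝ f x w := by fun_prop
  have hg' : Continuous fun x => fderiv ℝ g x w := by fun_prop
  have hleft := tendsto_integral_inv_smul_sub_mul (μ := μ) hf hfc hg' v
  have hright := (tendsto_integral_inv_smul_sub_mul (μ := μ) hg hgc hf' (-v)).neg
  simp only [← integral_inv_smul_sub_mul_fderiv_eq_neg hf hfc hg hgc] at hright
  calc ∫ x, fderiv ℝ f x v * fderiv ℝ g x w ∂μ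
      = -∫ x, fderiv ℝ g x (-v) * fderiv ℝ f x w ∂μ := tendsto_nhds_unique hleft hright
    _ = ∫ x, fderiv ℝ f x w * fderiv ℝ g x v ∂μ := by
        simp only [map_neg, neg_mul, integral_neg, neg_neg, mul_comm (fderiv ℝ g _ v)]

end HaarMeasure

section Hessian

variable {d : ℕ} {u : (Fin d → ℝ) → ℝ}

theorem isSymm_hessianMatrix (hu : ContDiff ℝ 2 u) (x : Fin d → ℝ) :
    (hessianMatrix u x).IsSymm := by
  have happly (v w : Fin d → ℝ) :
      fderiv ℝ (fun y => fderiv ℝ u y v) x w = fderiv ℝ (fderiv ℝ u) x w v := by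
    have hdiff : DifferentiableAt ℝ (fderiv ℝ u) x := by fun_prop
    simp [fderiv_clm_apply hdiff (differentiableAt_const v)]
  have hsymm : IsSymmSndFDerivAt ℝ u x := hu.contDiffAt.isSymmSndFDerivAt (by simp)
  refine IsSymm.ext fun i j => ?_
  simp only [hessianMatrix, of_apply, happly]
  exact hsymm _ _

theorem continuous_hessianMatrix (hu : ContDiff ℝ 2 u) : Continuous (hessianMatrix u) :=
  continuous_matrix fun i _ =>
    ((contDiff_one_fderiv_apply hu (Pi.single i 1)).continuous_fderiv one_ne_zero).clm_apply
      continuous_const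

theorem hasCompactSupport_hessianMatrix (hc : HasCompactSupport u) :
    HasCompactSupport (hessianMatrix u) := by
  refine HasCompactSupport.intro hc fun x hx => ?_
  ext i j
  have hpartial : x ∉ tsupport fun y => fderiv ℝ u y (Pi.single i 1) :=
    fun h => hx (tsupport_fderiv_apply_subset ℝ _ h)
  simp [hessianMatrix, fderiv_of_notMem_tsupport ℝ hpartial]

theorem integrable_comp_hessianMatrix (hu : ContDiff ℝ 2 u) (hc : HasCompactSupport u)
    {F : Matrix (Fin d) (Fin d) ℝ → ℝ} (hF : Continuous F) (hF0 : F 0 = 0) :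
    Integrable fun x => F (hessianMatrix u x) :=
  (hF.comp (continuous_hessianMatrix hu)).integrable_of_hasCompactSupport
    ((hasCompactSupport_hessianMatrix hc).comp_left hF0)

theorem integrable_frobNorm_hessianMatrix_sq (hu : ContDiff ℝ 2 u) (hc : HasCompactSupport u) :
    Integrable fun x => frobNorm (hessianMatrix u x) ^ 2 :=
  integrable_comp_hessianMatrix hu hc (F := fun M => frobNorm M ^ 2)
    (continuous_frobNorm.pow 2) (by simp [frobNorm, frobInner])

theorem integrable_trace_hessianMatrix_sq (hu : ContDiff ℝ 2 u) (hc : HasCompactSupport u) :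
    Integrable fun x => trace (hessianMatrix u x) ^ 2 :=
  integrable_comp_hessianMatrix hu hc (F := fun M => trace M ^ 2)
    (continuous_id.matrix_trace.pow 2) (by simp)

theorem integral_hessianMatrix_apply_sq (hu : ContDiff ℝ 2 u) (hc : HasCompactSupport u)
    (i j : Fin d) :
    ∫ x, hessianMatrix u x i j ^ 2 = ∫ x, hessianMatrix u x i i * hessianMatrix u x j j :=
  calc ∫ x, hessianMatrix u x i j ^ 2
      = ∫ x, hessianMatrix u x i j * hessianMatrix u x j i := by
        simp only [(isSymm_hessianMatrix hu _).apply i j, sq]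
    _ = ∫ x, hessianMatrix u x i i * hessianMatrix u x j j :=
        integral_fderiv_mul_fderiv_comm (contDiff_one_fderiv_apply hu _) (hc.fderiv_apply ℝ _)
          (contDiff_one_fderiv_apply hu _) (hc.fderiv_apply ℝ _) _ _

theorem integral_frobNorm_hessianMatrix_sq (hu : ContDiff ℝ 2 u) (hc : HasCompactSupport u) :
    ∫ x, frobNorm (hessianMatrix u x) ^ 2 = ∫ x, trace (hessianMatrix u x) ^ 2 := by
  have hsq (i j : Fin d) : Integrable fun x => hessianMatrix u x i j ^ 2 :=
    integrable_comp_hessianMatrix hu hc (F := fun M => M i j ^ 2) (by fun_prop) (by simp)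
  have hdiag (i j : Fin d) : Integrable fun x => hessianMatrix u x i i * hessianMatrix u x j j :=
    integrable_comp_hessianMatrix hu hc (F := fun M => M i i * M j j) (by fun_prop) (by simp)
  calc ∫ x, frobNorm (hessianMatrix u x) ^ 2
      = ∫ x, ∑ i, ∑ j, hessianMatrix u x i j ^ 2 := by
        simp only [frobNorm_sq, frobInner, ← sq]
    _ = ∑ i, ∑ j, ∫ x, hessianMatrix u x i j ^ 2 := by
        rw [integral_finsetSum _ fun i _ => integrable_finsetSum _ fun j _ => hsq i j]
        exact Finset.sum_congr rfl fun i _ => integral_finsetSum _ fun j _ => hsq i j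
    _ = ∑ i, ∑ j, ∫ x, hessianMatrix u x i i * hessianMatrix u x j j := by
        simp only [integral_hessianMatrix_apply_sq hu hc]
    _ = ∫ x, ∑ i, ∑ j, hessianMatrix u x i i * hessianMatrix u x j j := by
        rw [integral_finsetSum _ fun i _ => integrable_finsetSum _ fun j _ => hdiag i j]
        exact Finset.sum_congr rfl fun i _ => (integral_finsetSum _ fun j _ => hdiag i j).symm
    _ = ∫ x, trace (hessianMatrix u x) ^ 2 := by
        simp only [← Finset.sum_mul_sum, ← sq, trace, diag_apply]

end Hessian

section Coercivity

variable {d : ℕ} {ε : ℝ} {A : (Fin d → ℝ) → Matrix (Fin d) (Fin d) ℝ} {u : (Fin d → ℝ) → ℝ}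

theorem integrable_cordesFactor_mul_frobInner_mul_trace_hessianMatrix
    (hmeas : ∀ i j, AEMeasurable fun x => A x i j)
    (hae : ∀ᵐ x, A x ≠ 0 ∧ CordesCond ε (A x))
    (hu : ContDiff ℝ 2 u) (hc : HasCompactSupport u) :
    Integrable fun x =>
      cordesFactor (A x) * frobInner (A x) (hessianMatrix u x) * trace (hessianMatrix u x) := by
  have hH := continuous_hessianMatrix hu
  have htrace := integrable_trace_hessianMatrix_sq hu hc
  have hbound := ((integrable_frobNorm_hessianMatrix_sq hu hc).add htrace).const_mul (√(1 - ε) / 2)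
  have hprod : AEMeasurable fun x =>
      cordesFactor (A x) * frobInner (A x) (hessianMatrix u x) * trace (hessianMatrix u x) :=
    (aemeasurable_cordesFactor_mul_frobInner hmeas fun i j =>
      (hH.matrix_elem i j).aemeasurable).mul hH.matrix_trace.aemeasurable
  have herror : Integrable fun x =>
      cordesFactor (A x) * frobInner (A x) (hessianMatrix u x) * trace (hessianMatrix u x) -
        trace (hessianMatrix u x) ^ 2 := by
    refine hbound.mono' (hprod.aestronglyMeasurable.sub htrace.aestronglyMeasurable) ?_
    filter_upwards [hae] with x ⟨hne, hcordes⟩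
    exact hcordes.abs_cordesFactor_mul_frobInner_mul_trace_sub_trace_sq_le hne _
  simpa only [Pi.add_def, sub_add_cancel] using herror.add htrace

theorem cordes_coercivity_integral_general
    (hmeas : ∀ i j, AEMeasurable fun x => A x i j)
    (hae : ∀ᵐ x, A x ≠ 0 ∧ CordesCond ε (A x))
    (hu : ContDiff ℝ 2 u) (hc : HasCompactSupport u) :
    (1 - √(1 - ε)) * ∫ x, trace (hessianMatrix u x) ^ 2 ≤
      ∫ x, cordesFactor (A x) * frobInner (A x) (hessianMatrix u x) *
        trace (hessianMatrix u x) := by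
  have hfrob := integrable_frobNorm_hessianMatrix_sq hu hc
  have htrace := integrable_trace_hessianMatrix_sq hu hc
  have hbound : Integrable fun x => √(1 - ε) / 2 *
      (frobNorm (hessianMatrix u x) ^ 2 + trace (hessianMatrix u x) ^ 2) :=
    (hfrob.add htrace).const_mul _
  calc (1 - √(1 - ε)) * ∫ x, trace (hessianMatrix u x) ^ 2
      = ∫ x, (trace (hessianMatrix u x) ^ 2 - √(1 - ε) / 2 *
          (frobNorm (hessianMatrix u x) ^ 2 + trace (hessianMatrix u x) ^ 2)) := by
        rw [integral_sub htrace hbound, integral_const_mul, integral_add hfrob htrace,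
          integral_frobNorm_hessianMatrix_sq hu hc]
        ring
    _ ≤ ∫ x, cordesFactor (A x) * frobInner (A x) (hessianMatrix u x) *
          trace (hessianMatrix u x) := by
        refine integral_mono_ae (htrace.sub hbound)
          (integrable_cordesFactor_mul_frobInner_mul_trace_hessianMatrix hmeas hae hu hc) ?_
        filter_upwards [hae] with x ⟨hne, hcordes⟩
        exact sub_le_of_abs_sub_le_left
          (hcordes.abs_cordesFactor_mul_frobInner_mul_trace_sub_trace_sq_le hne _)

end Coercivity

theorem cordes_coercivity_integral {d : ℕ} (hd : 1 ≤ d) {ε : ℝ}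
    (hε0 : 0 < ε) (hε1 : ε ≤ 1)
    (A : (Fin d → ℝ) → Matrix (Fin d) (Fin d) ℝ)
    (hmeas : ∀ i j, Measurable fun x => A x i j)
    (hae : ∀ᵐ x : Fin d → ℝ, A x ≠ 0 ∧ CordesCond ε (A x))
    (u : (Fin d → ℝ) → ℝ) (hu : ContDiff ℝ (⊤ : ℕ∞) u) (hc : HasCompactSupport u) :
    (1 - Real.sqrt (1 - ε)) * ∫ x : Fin d → ℝ, (trace (hessianMatrix u x)) ^ 2
      ≤ ∫ x : Fin d → ℝ,
          (trace (A x) / frobNorm (A x) ^ 2) * frobInner (A x) (hessianMatrix u x)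
            * trace (hessianMatrix u x) :=
  cordes_coercivity_integral_general (fun i j => (hmeas i j).aemeasurable) hae
    (contDiff_infty.1 hu 2) hc
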